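/- Transfer entropy is bounded by stochastic interaction. For every parent assignment G, the total collective transfer entropy is at most the stochastic interaction: Σ_{i=1}^M T_i(G) ≤ S. -/

import Mathlib

/-!
After cancelling the terms `H(Y'^i | W^i)`, the claim reads `H(Y' | W) ≤ ∑ i, H(Y'^i | W^i, P_i)`.
Every entropy here is minus the expectation, under the joint law of `(Y', W)`, of the logarithm of a
conditional probability (`condEnt_eq`), so the difference of the two sides is
`E[log (p(Y' | W) / ∏ i, q_i(Y'^i | W))]` with `q_i(y | w) = P(Y'^i = y | W^i = w_i, P_i = p_i(w))`.
The inequality `log t ≥ 1 - 1 / t` bounds this below by `1 - ∑_{y,w} P(W = w) ∏ i, q_i(y_i | w)`,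
which is nonnegative because the inner sum over `y` factors as `∏ i, ∑_{y_i} q_i(y_i | w)` and each
factor is at most `1` (`sum_cpr_le_one`). This is Gibbs' inequality for the factorized model.
-/

open MeasureTheory Finset

/-- Conditional probability `P(X = x | Y = y)` computed from a measure. -/
noncomputable def cpr {Ω α β : Type*} [MeasurableSpace Ω] (μ : Measure Ω)
    (X : Ω → α) (Y : Ω → β) (x : α) (y : β) : ℝ :=
  (μ {ω | X ω = x ∧ Y ω = y}).toReal / (μ {ω | Y ω = y}).toReal

/-- Conditional entropy `H(X | Y) = -∑ P(X=x, Y=y) log P(X=x | Y=y)`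
(with the `0 · log 0 = 0` convention, automatic here since the coefficient vanishes). -/
noncomputable def condEnt {Ω α β : Type*} [MeasurableSpace Ω] (μ : Measure Ω)
    [Fintype α] [Fintype β] (X : Ω → α) (Y : Ω → β) : ℝ :=
  -∑ x : α, ∑ y : β, (μ {ω | X ω = x ∧ Y ω = y}).toReal * Real.log (cpr μ X Y x y)

/-- Collective transfer entropy into node `i` for the parent assignment `G`:
`T_i(G) = H(Y'^i | W^i) − H(Y'^i | (W^i, P_i))` where `P_i = (W^j)_{j ∈ G i}`. -/
noncomputable def transEnt {Ω : Type*} [MeasurableSpace Ω] (μ : Measure Ω) {M : ℕ}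
    {Yt Wt : Fin M → Type*} [∀ i, Fintype (Yt i)] [∀ i, Fintype (Wt i)]
    (Yv : ∀ i, Ω → Yt i) (Wv : ∀ i, Ω → Wt i)
    (G : Fin M → Finset (Fin M)) (i : Fin M) : ℝ :=
  condEnt μ (Yv i) (Wv i) -
    condEnt μ (Yv i) (fun ω => (Wv i ω, fun j : {j // j ∈ G i} => Wv j.1 ω))

/-- Stochastic interaction `S = −H(Y' | W) + ∑ i, H(Y'^i | W^i)`. -/
noncomputable def stochInt {Ω : Type*} [MeasurableSpace Ω] (μ : Measure Ω) {M : ℕ}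
    {Yt Wt : Fin M → Type*} [∀ i, Fintype (Yt i)] [∀ i, Fintype (Wt i)]
    (Yv : ∀ i, Ω → Yt i) (Wv : ∀ i, Ω → Wt i) : ℝ :=
  -condEnt μ (fun ω (i : Fin M) => Yv i ω) (fun ω (i : Fin M) => Wv i ω) +
    ∑ i, condEnt μ (Yv i) (Wv i)

/-- Conditional KL divergence of the factorized model determined by `G` from the
observed joint distribution:
`D(G) = ∑_{y,w} P(Y'=y, W=w) · log [ P(Y'=y | W=w) / ∏ i, P(Y'^i=y_i | W^i=w_i, P_i=p_i(w)) ]`.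
(Terms with `P(Y'=y, W=w) = 0` vanish, so the sum effectively ranges over the support.) -/
noncomputable def condKL {Ω : Type*} [MeasurableSpace Ω] (μ : Measure Ω) {M : ℕ}
    {Yt Wt : Fin M → Type*} [∀ i, Fintype (Yt i)] [∀ i, Fintype (Wt i)]
    (Yv : ∀ i, Ω → Yt i) (Wv : ∀ i, Ω → Wt i)
    (G : Fin M → Finset (Fin M)) : ℝ :=
  ∑ y : ∀ i, Yt i, ∑ w : ∀ i, Wt i,
    (μ {ω | (fun i => Yv i ω) = y ∧ (fun i => Wv i ω) = w}).toReal *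
      Real.log (cpr μ (fun ω (i : Fin M) => Yv i ω) (fun ω (i : Fin M) => Wv i ω) y w /
        ∏ i, cpr μ (Yv i) (fun ω => (Wv i ω, fun j : {j // j ∈ G i} => Wv j.1 ω))
          (y i) (w i, fun j : {j // j ∈ G i} => w j.1))

section Helpers

variable {Ω : Type*} [MeasurableSpace Ω] (μ : Measure Ω)

/-- Change of variables: the expectation of `f ∘ g` under the law of `V` equals that of `f` under
the law of `g ∘ V`. -/
lemma sum_map_law [IsProbabilityMeasure μ] {γ δ : Type*} [Fintype γ] [Fintype δ] (V : Ω → γ)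
    (hV : ∀ v, MeasurableSet {ω | V ω = v}) (g : γ → δ) (f : δ → ℝ) :
    ∑ d, (μ {ω | g (V ω) = d}).toReal * f d = ∑ v, (μ {ω | V ω = v}).toReal * f (g v) := by
  classical
  have key : ∀ d, (μ {ω | g (V ω) = d}).toReal
      = ∑ v ∈ univ.filter (fun v => g v = d), (μ {ω | V ω = v}).toReal := by
    intro d
    have h := sum_measureReal_preimage_singleton (μ := μ) (univ.filter (fun v => g v = d))
      (f := V) (fun v _ => hV v)
    have h2 : V ⁻¹' ((univ.filter (fun v => g v = d) : Finset γ) : Set γ)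
        = {ω | g (V ω) = d} := by
      ext ω; simp
    rw [h2] at h
    exact h.symm
  rw [← Finset.sum_fiberwise (s := univ) (g := g)
    (f := fun v => (μ {ω | V ω = v}).toReal * f (g v))]
  refine Finset.sum_congr rfl fun d _ => ?_
  rw [key, Finset.sum_mul]
  refine Finset.sum_congr rfl fun v hv => ?_
  rw [(Finset.mem_filter.1 hv).2]

lemma sum_law [IsProbabilityMeasure μ] {γ : Type*} [Fintype γ] (V : Ω → γ) (hV : ∀ v, MeasurableSet {ω | V ω = v}) :
    ∑ v, (μ {ω | V ω = v}).toReal = 1 := by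
  have h := sum_map_law μ V hV (fun _ => ()) (fun _ => 1)
  simpa using h.symm

lemma cpr_nonneg {α β : Type*} (X : Ω → α) (Y : Ω → β) (x : α) (y : β) : 0 ≤ cpr μ X Y x y :=
  div_nonneg ENNReal.toReal_nonneg ENNReal.toReal_nonneg

/-- The sum is `1` unless `P(Y = y) = 0`, when every summand is `0 / 0 = 0`. -/
lemma sum_cpr_le_one [IsProbabilityMeasure μ] {α β : Type*} [Fintype α] (X : Ω → α) (Y : Ω → β)
    (hX : ∀ x, MeasurableSet {ω | X ω = x}) (hY : ∀ y, MeasurableSet {ω | Y ω = y}) (y : β) :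
    ∑ x, cpr μ X Y x y ≤ 1 := by
  have h := sum_measureReal_preimage_singleton (μ := μ) ((univ : Finset α) ×ˢ {y})
    (f := fun ω => (X ω, Y ω)) (fun v _ => by
      have : (fun ω => (X ω, Y ω)) ⁻¹' {v} = {ω | X ω = v.1} ∩ {ω | Y ω = v.2} := by
        ext ω; simp [Prod.ext_iff]
      rw [this]; exact (hX _).inter (hY _))
  rw [Finset.sum_product] at h
  have h1 : ∀ x, (fun ω => (X ω, Y ω)) ⁻¹' {(x, y)} = {ω | X ω = x ∧ Y ω = y} := by
    intro x; ext ω; simp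
  have h2 : (fun ω => (X ω, Y ω)) ⁻¹' (((univ : Finset α) ×ˢ {y} : Finset (α × β)) : Set (α × β))
      = {ω | Y ω = y} := by
    ext ω; simp [eq_comm]
  rw [h2] at h
  simp only [Finset.sum_singleton, h1, Measure.real] at h
  unfold cpr
  rw [← Finset.sum_div, h]
  exact div_self_le_one _

lemma cpr_pos [IsProbabilityMeasure μ] {γ α β : Type*} (V : Ω → γ) (gx : γ → α) (gy : γ → β) (v : γ)
    (h : 0 < (μ {ω | V ω = v}).toReal) :
    0 < cpr μ (fun ω => gx (V ω)) (fun ω => gy (V ω)) (gx v) (gy v) := by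
  refine div_pos (h.trans_le ?_) (h.trans_le ?_)
  · refine ENNReal.toReal_mono (measure_ne_top _ _) (measure_mono ?_)
    rintro ω rfl; exact ⟨rfl, rfl⟩
  · refine ENNReal.toReal_mono (measure_ne_top _ _) (measure_mono ?_)
    rintro ω rfl; rfl

/-- The conditional entropy of two functions of `V` as an expectation under the law of `V`. -/
lemma condEnt_eq [IsProbabilityMeasure μ] {γ α β : Type*} [Fintype γ] [Fintype α] [Fintype β] (V : Ω → γ)
    (hV : ∀ v, MeasurableSet {ω | V ω = v}) (gx : γ → α) (gy : γ → β) :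
    condEnt μ (fun ω => gx (V ω)) (fun ω => gy (V ω)) =
      -∑ v, (μ {ω | V ω = v}).toReal *
        Real.log (cpr μ (fun ω => gx (V ω)) (fun ω => gy (V ω)) (gx v) (gy v)) := by
  have h := sum_map_law μ V hV (fun v => (gx v, gy v))
    (fun d => Real.log (cpr μ (fun ω => gx (V ω)) (fun ω => gy (V ω)) d.1 d.2))
  rw [Fintype.sum_prod_type] at h
  simp only [Prod.mk.injEq] at h
  rw [condEnt, h]

end Helpers

/-- **Transfer entropy is bounded by stochastic interaction.**
For every parent assignment `G`, `∑ i, T_i(G) ≤ S`. -/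
theorem sum_transEnt_le_stochInt {Ω : Type*} [MeasurableSpace Ω] (μ : Measure Ω) [IsProbabilityMeasure μ]
    {M : ℕ} (hM : 1 ≤ M)
    (Yt Wt : Fin M → Type*)
    [∀ i, Fintype (Yt i)] [∀ i, Nonempty (Yt i)]
    [∀ i, Fintype (Wt i)] [∀ i, Nonempty (Wt i)]
    (Yv : ∀ i, Ω → Yt i) (Wv : ∀ i, Ω → Wt i)
    (hYm : ∀ i (a : Yt i), MeasurableSet {ω | Yv i ω = a})
    (hWm : ∀ i (b : Wt i), MeasurableSet {ω | Wv i ω = b})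
    (G : Fin M → Finset (Fin M)) (hG : ∀ i, i ∉ G i) :
    ∑ i, transEnt μ Yv Wv G i ≤ stochInt μ Yv Wv := by
  classical
  -- every entropy is written as an expectation under the law of the joint variable `V = (Y', W)`
  let V : Ω → (∀ i, Yt i) × (∀ i, Wt i) := fun ω => (fun i => Yv i ω, fun i => Wv i ω)
  have hW : ∀ w : ∀ i, Wt i, MeasurableSet {ω | (fun i => Wv i ω) = w} := by
    intro w
    have : {ω | (fun i => Wv i ω) = w} = ⋂ i, {ω | Wv i ω = w i} := by
      ext ω; simp [funext_iff]
    rw [this]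
    exact MeasurableSet.iInter fun i => hWm i _
  have hV : ∀ v, MeasurableSet {ω | V ω = v} := by
    intro v
    have : {ω | V ω = v} = (⋂ i, {ω | Yv i ω = v.1 i}) ∩ {ω | (fun i => Wv i ω) = v.2} := by
      ext ω; simp [V, Prod.ext_iff, funext_iff]
    rw [this]
    exact (MeasurableSet.iInter fun i => hYm i _).inter (hW _)
  have hZ : ∀ i (z : Wt i × (∀ j : {j // j ∈ G i}, Wt j.1)),
      MeasurableSet {ω | (Wv i ω, fun j : {j // j ∈ G i} => Wv j.1 ω) = z} := by
    intro i z
    have : {ω | (Wv i ω, fun j : {j // j ∈ G i} => Wv j.1 ω) = z}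
        = {ω | Wv i ω = z.1} ∩ ⋂ j : {j // j ∈ G i}, {ω | Wv j.1 ω = z.2 j} := by
      ext ω; simp [Prod.ext_iff, funext_iff]
    rw [this]
    exact (hWm _ _).inter (MeasurableSet.iInter fun j => hWm _ _)
  let m : (∀ i, Yt i) × (∀ i, Wt i) → ℝ := fun v => (μ {ω | V ω = v}).toReal
  let r : (∀ i, Wt i) → ℝ := fun w => (μ {ω | (fun i => Wv i ω) = w}).toReal
  let p : (∀ i, Yt i) × (∀ i, Wt i) → ℝ := fun v =>
    cpr μ (fun ω (i : Fin M) => Yv i ω) (fun ω (i : Fin M) => Wv i ω) v.1 v.2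
  let q : ∀ i, Yt i → (∀ i, Wt i) → ℝ := fun i a w =>
    cpr μ (Yv i) (fun ω => (Wv i ω, fun j : {j // j ∈ G i} => Wv j.1 ω))
      a (w i, fun j : {j // j ∈ G i} => w j.1)
  have e0 : condEnt μ (fun ω (i : Fin M) => Yv i ω) (fun ω (i : Fin M) => Wv i ω)
      = -∑ v, m v * Real.log (p v) := condEnt_eq μ V hV Prod.fst Prod.snd
  have e1 : ∀ i, condEnt μ (Yv i) (fun ω => (Wv i ω, fun j : {j // j ∈ G i} => Wv j.1 ω))
      = -∑ v, m v * Real.log (q i (v.1 i) v.2) := fun i =>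
    condEnt_eq μ V hV (fun v => v.1 i) (fun v => (v.2 i, fun j : {j // j ∈ G i} => v.2 j.1))
  have hq0 : ∀ i a w, 0 ≤ q i a w := fun i a w => cpr_nonneg μ _ _ _ _
  have hr0 : ∀ w, 0 ≤ r w := fun w => ENNReal.toReal_nonneg
  -- the pointwise form of Gibbs' inequality; off the support the left side is nonpositive
  have pt : ∀ v, m v - r v.2 * ∏ i, q i (v.1 i) v.2
      ≤ m v * Real.log (p v) - ∑ i, m v * Real.log (q i (v.1 i) v.2) := by
    intro v
    have hm0 : 0 ≤ m v := ENNReal.toReal_nonneg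
    have hprod : 0 ≤ ∏ i, q i (v.1 i) v.2 := Finset.prod_nonneg fun i _ => hq0 _ _ _
    rcases hm0.eq_or_lt with h | h
    · rw [← h]
      simpa using mul_nonneg (hr0 v.2) hprod
    · have hp : 0 < p v := cpr_pos μ V Prod.fst Prod.snd v h
      have hq : ∀ i, 0 < q i (v.1 i) v.2 := fun i =>
        cpr_pos μ V (fun v => v.1 i) (fun v => (v.2 i, fun j : {j // j ∈ G i} => v.2 j.1)) v h
      have hQ : 0 < ∏ i, q i (v.1 i) v.2 := Finset.prod_pos fun i _ => hq i
      have hpm : p v = m v / r v.2 := by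
        simp only [p, m, r, V, cpr, Prod.ext_iff]
      have hr : r v.2 ≠ 0 := by
        intro h0
        rw [hpm, h0, div_zero] at hp
        exact lt_irrefl _ hp
      have hlog := Real.one_sub_inv_le_log_of_pos (div_pos hp hQ)
      rw [Real.log_div hp.ne' hQ.ne', Real.log_prod (fun i _ => (hq i).ne')] at hlog
      have := mul_le_mul_of_nonneg_left hlog h.le
      rw [← Finset.mul_sum, ← mul_sub]
      refine le_trans (le_of_eq ?_) this
      rw [hpm]
      have hm : m v ≠ 0 := h.ne'
      field_simp
  have hm1 : ∑ v, m v = 1 := sum_law μ V hV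
  have hr1 : ∑ w, r w = 1 := sum_law μ (fun ω (i : Fin M) => Wv i ω) hW
  have hmodel : ∑ v : (∀ i, Yt i) × (∀ i, Wt i), r v.2 * ∏ i, q i (v.1 i) v.2 ≤ 1 := by
    rw [Fintype.sum_prod_type_right, ← hr1]
    refine Finset.sum_le_sum fun w _ => ?_
    dsimp only
    rw [← Finset.mul_sum]
    refine mul_le_of_le_one_right (hr0 w) ?_
    have hfac : ∑ y : ∀ i, Yt i, ∏ i, q i (y i) w = ∏ i, ∑ a, q i a w := by
      rw [Finset.prod_univ_sum, Fintype.piFinset_univ]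
    rw [hfac]
    exact Finset.prod_le_one (fun i _ => Finset.sum_nonneg fun a _ => hq0 i a w)
      (fun i _ => sum_cpr_le_one μ _ _ (hYm i) (hZ i) _)
  have hsum := Finset.sum_le_sum fun v (_ : v ∈ (univ : Finset _)) => pt v
  rw [Finset.sum_sub_distrib, Finset.sum_sub_distrib, Finset.sum_comm, hm1] at hsum
  simp only [transEnt, stochInt, Finset.sum_sub_distrib, e0, e1, Finset.sum_neg_distrib]
  linarith
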